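/- arXiv:2006.07927 — 2 statements merged into one kernel-verified Lean document; each statement's English description precedes it below -/
import Mathlib

section
/- For every integer n ≥ 1 and every real p with 1 ≤ p < q_KL, one has f_n(q_KL) − f_n(p) ≥ q_KL − p, where f_n(q) := q^n − Σ_{i=1}^n τ_i q^{n−i}. -/
/-!
Write `K` for `qKL`. The polynomials satisfy `f_{n+1}(q) = q f_n(q) - τ_{n+1}`, so the differences
`D_n = f_n(K) - f_n(p)` satisfy `D_{n+1} = p D_n + (K - p) f_n(K)`. Because `∑ τ_i K^{-i} = 1`,
the value `f_n(K) = K^n (1 - ∑_{i ≤ n} τ_i K^{-i})` is `K^n` times a tail of a series of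
nonnegative terms, hence nonnegative. With `p ≥ 1` this makes `D_n` nondecreasing, and
`D_1 = K - p`.
-/

open Filter Set

noncomputable section

/-- `d` is a `q`-expansion of `x`: all digits lie in `{0,1}` and
`x = ∑_{i=1}^∞ d_i q^{-i}`.  Here `d i` stands for the digit `d_{i+1}`. -/
def IsExpansion (q x : ℝ) (d : ℕ → ℕ) : Prop :=
  (∀ i, d i ≤ 1) ∧ x = ∑' i : ℕ, (d i : ℝ) / q ^ (i + 1)

/-- `𝒰(x)`: the set of bases `q ∈ (1,2]` in which `x` has a unique expansion. -/
def UnivSet (x : ℝ) : Set ℝ :=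
  {q | q ∈ Set.Ioc (1 : ℝ) 2 ∧ ∃! d : ℕ → ℕ, IsExpansion q x d}

/-- `q_s(x) = inf 𝒰(x)`. -/
def qs (x : ℝ) : ℝ := sInf (UnivSet x)

/-- The level set `L(q) = {x > 0 : q_s(x) = q}`. -/
def levelSet (q : ℝ) : Set ℝ := {x | 0 < x ∧ qs x = q}

/-- The golden ratio `q_G = (1+√5)/2`. -/
def qG : ℝ := (1 + Real.sqrt 5) / 2

/-- The Thue–Morse sequence: `tm i = s_i mod 2`, where `s_i` is the number of
`1`s in the binary representation of `i`. -/
def tm (i : ℕ) : ℕ := (Nat.digits 2 i).sum % 2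

/-- The set `S ⊆ ℕ`: `2, 3, 4 ∈ S`, and for `k ≥ 2` and `2^k < n ≤ 2^{k+1}`,
`n ∈ S` iff `n > 3·2^{k-1}` and `n - 3·2^{k-1} ∈ S`; no other elements. -/
inductive memS : ℕ → Prop
  | two : memS 2
  | three : memS 3
  | four : memS 4
  | step (k n : ℕ) (hk : 2 ≤ k) (h1 : 2 ^ k < n) (h2 : n ≤ 2 ^ (k + 1))
      (h3 : 3 * 2 ^ (k - 1) < n) (h : memS (n - 3 * 2 ^ (k - 1))) : memS n

/-- The polynomial `f_n(q) = q^n - ∑_{i=1}^n τ_i q^{n-i}`, with the summation index shifted so that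
it starts at `0`. -/
def tmPoly (n : ℕ) (q : ℝ) : ℝ :=
  q ^ n - ∑ i ∈ Finset.range n, (tm (i + 1) : ℝ) * q ^ (n - (i + 1))

theorem tmPoly_succ (n : ℕ) (q : ℝ) : tmPoly (n + 1) q = q * tmPoly n q - tm (n + 1) := by
  have h : ∑ i ∈ Finset.range n, (tm (i + 1) : ℝ) * q ^ (n + 1 - (i + 1))
      = q * ∑ i ∈ Finset.range n, (tm (i + 1) : ℝ) * q ^ (n - (i + 1)) := by
    rw [Finset.mul_sum]
    refine Finset.sum_congr rfl fun i hi => ?_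
    have hi' := Finset.mem_range.mp hi
    rw [show n + 1 - (i + 1) = (n - (i + 1)) + 1 by omega, pow_succ]
    ring
  unfold tmPoly
  rw [Finset.sum_range_succ, h, Nat.sub_self]
  ring

theorem tmPoly_eq_pow_mul (n : ℕ) {q : ℝ} (hq : q ≠ 0) :
    tmPoly n q = q ^ n * (1 - ∑ i ∈ Finset.range n, (tm (i + 1) : ℝ) / q ^ (i + 1)) := by
  unfold tmPoly
  rw [mul_sub, mul_one, Finset.mul_sum]
  congr 1
  refine Finset.sum_congr rfl fun i hi => ?_
  have hi' : i + 1 ≤ n := Finset.mem_range.mp hi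
  rw [pow_sub₀ q hq hi']
  ring

theorem tmPoly_nonneg_of_tsum_eq_one {q : ℝ} (hq : 0 < q)
    (hsum : ∑' i : ℕ, (tm (i + 1) : ℝ) / q ^ (i + 1) = 1) (n : ℕ) : 0 ≤ tmPoly n q := by
  -- A non-summable family would have the default sum `0`, not `1`.
  have hs : Summable fun i : ℕ => (tm (i + 1) : ℝ) / q ^ (i + 1) := by
    by_contra h
    rw [tsum_eq_zero_of_not_summable h] at hsum
    exact zero_ne_one hsum
  have hle := hs.sum_le_tsum (Finset.range n) fun i _ => by positivity
  rw [hsum] at hle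
  rw [tmPoly_eq_pow_mul n hq.ne']
  exact mul_nonneg (by positivity) (sub_nonneg.mpr hle)

/-- for `n ≥ 1` and `1 ≤ p < q_KL`,
`f_n(q_KL) - f_n(p) ≥ q_KL - p`, where `f_n(q) = q^n - ∑_{i=1}^n τ_i q^{n-i}`. -/
theorem fn_difference_bound (qKL : ℝ) (hKL : qKL ∈ Set.Ioo (1 : ℝ) 2)
    (hKLsum : ∑' i : ℕ, (tm (i + 1) : ℝ) / qKL ^ (i + 1) = 1)
    (n : ℕ) (hn : 1 ≤ n) (p : ℝ) (hp1 : 1 ≤ p) (hp2 : p < qKL) :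
    qKL - p ≤
      (qKL ^ n - ∑ i ∈ Finset.range n, (tm (i + 1) : ℝ) * qKL ^ (n - (i + 1)))
        - (p ^ n - ∑ i ∈ Finset.range n, (tm (i + 1) : ℝ) * p ^ (n - (i + 1))) := by
  change qKL - p ≤ tmPoly n qKL - tmPoly n p
  induction n, hn using Nat.le_induction with
  | base => simp [tmPoly]
  | succ n _ ih =>
    have hf := tmPoly_nonneg_of_tsum_eq_one (zero_lt_one.trans hKL.1) hKLsum n
    calc qKL - p ≤ tmPoly n qKL - tmPoly n p := ih
      _ ≤ p * (tmPoly n qKL - tmPoly n p) :=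
        le_mul_of_one_le_left ((sub_pos.mpr hp2).le.trans ih) hp1
      _ ≤ p * (tmPoly n qKL - tmPoly n p) + (qKL - p) * tmPoly n qKL :=
        le_add_of_nonneg_right (mul_nonneg (sub_pos.mpr hp2).le hf)
      _ = tmPoly (n + 1) qKL - tmPoly (n + 1) p := by
        rw [tmPoly_succ, tmPoly_succ]
        ring
end
end

section
/- Let n ∈ S. Then: (i) τ_n + τ_{n+1} = 1, i.e. the pair (τ_n, τ_{n+1}) is (0,1) or (1,0); (ii) q_G^{-2} < x_n < 1, where x_n := Σ_{i=0}^∞ τ_{n+i} q_KL^{-(i+1)}. -/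
/-!
Write `t = 1 / q_KL` and `x n = ∑ τ_{n+i} t^{i+1}`, so that `x n = t (τ_n + x (n+1))`.

Part (i) follows by induction on `n ∈ S`: adding `3·2^{k-1}` to some `m < 2^{k-1}` adds two binary
ones and keeps `τ_m`; the boundary cases `m + 1 = 2^{k-1}` and `m = 2^{k-1}` concern powers of two.

For part (ii), the Thue–Morse word is a concatenation of the blocks `01` and `10`, because
`τ_{2m} + τ_{2m+1} = 1`. Hence `t² + t² x (2m+2) ≤ x (2m) ≤ t + t² x (2m+2)`, which gives
`t²/(1-t²) ≤ x (2m) ≤ t/(1-t²)` for every `m` (`X_even_bounds`). Substituted into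
`1 = x 1 = t + t² + t⁴ + t⁷ (1 + x 8)`, these bounds confine `t` to `(5/9, 10/17)` (`t_bounds`),
so that every `x n` lies in `[0.248, 1.12]` (`X_bounds`). By (i), either
`x n = t² (1 + x (n+2))` or `x n = t + t² x (n+2)`, and in both cases the numerical bounds put `x n`
strictly between `0.385 > q_G^{-2}` and `1`.
-/

open Filter Set

noncomputable section

/-! ### Arithmetic of the Thue–Morse sequence -/

theorem tm_le_one (n : ℕ) : tm n ≤ 1 := by unfold tm; omega

theorem tm_two_mul (n : ℕ) : tm (2 * n) = tm n := by
  rcases Nat.eq_zero_or_pos n with rfl | h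
  · rfl
  · unfold tm
    rw [Nat.digits_def' (by norm_num) (by omega : 0 < 2 * n)]
    simp

theorem tm_two_mul_add_one (n : ℕ) : tm (2 * n + 1) = 1 - tm n := by
  unfold tm
  rw [Nat.digits_def' (by norm_num) (by omega : 0 < 2 * n + 1)]
  have h1 : (2 * n + 1) % 2 = 1 := by omega
  have h2 : (2 * n + 1) / 2 = n := by omega
  rw [h1, h2, List.sum_cons]
  omega

theorem tm_zero : tm 0 = 0 := by simp [tm]

/-- Putting a new leading binary digit `1` in front of `m` flips `τ_m`. -/
theorem tm_two_pow_add (j : ℕ) : ∀ m < 2 ^ j, tm (2 ^ j + m) = 1 - tm m := by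
  induction j with
  | zero =>
    intro m hm
    obtain rfl : m = 0 := by simpa using hm
    simpa using tm_two_mul_add_one 0
  | succ j ih =>
    intro m hm
    rw [pow_succ] at hm ⊢
    obtain ⟨r, rfl | rfl⟩ : ∃ r, m = 2 * r ∨ m = 2 * r + 1 := ⟨m / 2, by omega⟩
    · rw [show 2 ^ j * 2 + 2 * r = 2 * (2 ^ j + r) by ring, tm_two_mul, tm_two_mul,
        ih r (by omega)]
    · rw [show 2 ^ j * 2 + (2 * r + 1) = 2 * (2 ^ j + r) + 1 by ring, tm_two_mul_add_one,
        tm_two_mul_add_one, ih r (by omega)]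

theorem tm_two_pow (j : ℕ) : tm (2 ^ j) = 1 := by
  simpa [tm_zero] using tm_two_pow_add j 0 (by positivity)

theorem tm_three_mul_two_pow_add (j m : ℕ) (hm : m < 2 ^ j) : tm (3 * 2 ^ j + m) = tm m := by
  have h1 := tm_two_pow_add (j + 1) (2 ^ j + m) (by rw [pow_succ]; omega)
  rw [tm_two_pow_add j m hm] at h1
  have := tm_le_one m
  rw [show 3 * 2 ^ j + m = 2 ^ (j + 1) + (2 ^ j + m) by ring, h1]
  omega

theorem tm_add_tm_succ (n : ℕ) (hn : memS n) : tm n + tm (n + 1) = 1 := by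
  induction hn with
  | two => simp [tm]
  | three => simp [tm]
  | four => simp [tm]
  | step k n hk h1 h2 h3 h ih =>
    obtain ⟨j, rfl⟩ : ∃ j, k = j + 1 := ⟨k - 1, by omega⟩
    simp only [Nat.add_sub_cancel] at h3 ih
    obtain ⟨m, rfl⟩ : ∃ m, n = 3 * 2 ^ j + m := ⟨n - 3 * 2 ^ j, by omega⟩
    rw [Nat.add_sub_cancel_left] at ih
    have hp : 2 ^ (j + 1 + 1) = 4 * 2 ^ j := by ring
    have hm : m ≤ 2 ^ j := by omega
    rcases hm.lt_or_eq with hlt | rfl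
    · rw [tm_three_mul_two_pow_add j m hlt]
      rcases (Nat.succ_le_of_lt hlt).lt_or_eq with hlt' | heq
      · rw [add_assoc, tm_three_mul_two_pow_add j (m + 1) hlt']
        exact ih
      · have heq' : m + 1 = 2 ^ j := heq
        rw [heq', tm_two_pow] at ih
        rw [add_assoc, heq', show 3 * 2 ^ j + 2 ^ j = 2 ^ (j + 2) by ring, tm_two_pow]
        exact ih
    · rw [show 3 * 2 ^ j + 2 ^ j = 2 ^ (j + 2) by ring, tm_two_pow,
        tm_two_pow_add (j + 2) 1 (Nat.one_lt_two_pow (by omega))]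
      simp [tm]

/-! ### The sums `x n` and their bounds -/

/-- The number `x n = ∑_{i ≥ 0} τ_{n+i} t^{i+1}`, written in terms of `t = 1 / q`. -/
def X (t : ℝ) (n : ℕ) : ℝ := ∑' i : ℕ, (tm (n + i) : ℝ) * t ^ (i + 1)

section

variable {t : ℝ}

theorem term_le (h0 : 0 < t) (n i : ℕ) : (tm (n + i) : ℝ) * t ^ (i + 1) ≤ t * t ^ i := by
  have h : (tm (n + i) : ℝ) ≤ 1 := by exact_mod_cast tm_le_one _
  calc (tm (n + i) : ℝ) * t ^ (i + 1) ≤ 1 * t ^ (i + 1) := by gcongr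
    _ = t * t ^ i := by ring

theorem X_summable (h0 : 0 < t) (h1 : t < 1) (n : ℕ) :
    Summable fun i : ℕ => (tm (n + i) : ℝ) * t ^ (i + 1) :=
  Summable.of_nonneg_of_le (fun i => by positivity) (term_le h0 n)
    ((summable_geometric_of_lt_one h0.le h1).mul_left t)

theorem X_nonneg (h0 : 0 < t) (n : ℕ) : 0 ≤ X t n := tsum_nonneg fun i => by positivity

theorem X_le (h0 : 0 < t) (h1 : t < 1) (n : ℕ) : X t n ≤ t * (1 - t)⁻¹ := by
  rw [← tsum_geometric_of_lt_one h0.le h1, ← tsum_mul_left]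
  exact (X_summable h0 h1 n).tsum_le_tsum (term_le h0 n)
    ((summable_geometric_of_lt_one h0.le h1).mul_left t)

theorem X_succ (h0 : 0 < t) (h1 : t < 1) (n : ℕ) : X t n = t * (tm n + X t (n + 1)) := by
  unfold X
  rw [(X_summable h0 h1 n).tsum_eq_zero_add, mul_add, ← tsum_mul_left]
  congr 1
  · simp [mul_comm]
  · refine tsum_congr fun i => ?_
    rw [show n + (i + 1) = n + 1 + i by ring]
    ring

/-- A bounded sequence with `f m ≤ a + r f (m+1)` lies below the fixed point of `y ↦ a + r y`:
its supremum `s` satisfies `s ≤ a + r s`. -/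
theorem le_fixed_point {f : ℕ → ℝ} {a r C : ℝ} (hr0 : 0 ≤ r) (hr1 : r < 1) (hC : ∀ m, f m ≤ C)
    (hf : ∀ m, f m ≤ a + r * f (m + 1)) (m : ℕ) : f m ≤ a / (1 - r) := by
  have hb : BddAbove (range f) := ⟨C, by rintro _ ⟨m, rfl⟩; exact hC m⟩
  have hs : (⨆ m, f m) ≤ a + r * ⨆ m, f m := ciSup_le fun m =>
    (hf m).trans (by gcongr; exact le_ciSup hb (m + 1))
  refine (le_ciSup hb m).trans ?_
  rw [le_div_iff₀ (by linarith)]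
  linarith

theorem X_even_bounds (h0 : 0 < t) (h1 : t < 1) (m : ℕ) :
    t ^ 2 / (1 - t ^ 2) ≤ X t (2 * m) ∧ X t (2 * m) ≤ t / (1 - t ^ 2) := by
  have hr1 : t ^ 2 < 1 := by nlinarith
  have htt : t ^ 2 ≤ t := by nlinarith
  -- The block `(τ_{2m}, τ_{2m+1})` is `01` or `10`, contributing `t²` or `t` respectively.
  have hrec : ∀ m, X t (2 * m) = t ^ 2 + t ^ 2 * X t (2 * (m + 1)) ∨
      X t (2 * m) = t + t ^ 2 * X t (2 * (m + 1)) := by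
    intro m
    have e : X t (2 * m) = t * (tm (2 * m) + t * (tm (2 * m + 1) + X t (2 * (m + 1)))) := by
      rw [X_succ h0 h1 (2 * m), X_succ h0 h1 (2 * m + 1)]
      rfl
    rw [tm_two_mul_add_one, tm_two_mul] at e
    have := tm_le_one m
    rcases (by omega : tm m = 0 ∨ tm m = 1) with h | h <;> rw [h] at e
    · left; rw [e]; push_cast; ring
    · right; rw [e]; push_cast; ring
  constructor
  · have := le_fixed_point (f := fun m => -X t (2 * m)) (a := -t ^ 2) (r := t ^ 2) (C := 0)
      (by positivity) hr1 (fun m => by simpa using X_nonneg h0 (2 * m))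
      (fun m => by rcases hrec m with h | h <;> simp only [h] <;> linarith) m
    rw [neg_div] at this
    linarith
  · exact le_fixed_point (f := fun m => X t (2 * m)) (by positivity) hr1
      (fun m => X_le h0 h1 (2 * m))
      (fun m => by rcases hrec m with h | h <;> simp only [h] <;> linarith) m

/-- The equation `x 1 = 1` locates `t = 1 / q_KL`; the digits used are `τ_1 … τ_7 = 1101001`. -/
theorem t_bounds (h0 : 0 < t) (h1 : t < 1) (hX : X t 1 = 1) : 5 / 9 < t ∧ t < 10 / 17 := by
  have e : t + t ^ 2 + t ^ 4 + t ^ 7 * (1 + X t 8) = 1 := by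
    refine Eq.trans ?_ hX
    rw [X_succ h0 h1 1, X_succ h0 h1 2, X_succ h0 h1 3, X_succ h0 h1 4, X_succ h0 h1 5,
      X_succ h0 h1 6, X_succ h0 h1 7]
    simp [tm]
    ring
  constructor
  · by_contra! ht
    have h8 : X t 8 ≤ 45 / 56 := by
      refine (X_even_bounds h0 h1 4).2.trans ?_
      rw [div_le_iff₀ (by nlinarith)]
      nlinarith
    have : t + t ^ 2 + t ^ 4 + t ^ 7 * (1 + X t 8) ≤
        5 / 9 + (5 / 9) ^ 2 + (5 / 9) ^ 4 + (5 / 9) ^ 7 * (1 + 45 / 56) := by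
      have := X_nonneg h0 8
      gcongr
    norm_num at this
    linarith
  · by_contra! ht
    have : (10 / 17 : ℝ) + (10 / 17) ^ 2 + (10 / 17) ^ 4 ≤ t + t ^ 2 + t ^ 4 := by gcongr
    have h7 : 0 ≤ t ^ 7 * (1 + X t 8) := by
      have := X_nonneg h0 8
      positivity
    norm_num at this
    linarith

theorem X_bounds (hl : 5 / 9 < t) (hu : t < 10 / 17) (n : ℕ) :
    248 / 1000 ≤ X t n ∧ X t n ≤ 112 / 100 := by
  have h0 : 0 < t := by linarith
  have h1 : t < 1 := by linarith
  have heven : ∀ m, 25 / 56 ≤ X t (2 * m) ∧ X t (2 * m) ≤ 170 / 189 := by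
    intro m
    have hd : 0 < 1 - t ^ 2 := by nlinarith
    constructor
    · refine le_trans ?_ (X_even_bounds h0 h1 m).1
      rw [le_div_iff₀ hd]
      nlinarith
    · refine (X_even_bounds h0 h1 m).2.trans ?_
      rw [div_le_iff₀ hd]
      nlinarith
  obtain ⟨r, rfl | rfl⟩ : ∃ r, n = 2 * r ∨ n = 2 * r + 1 := ⟨n / 2, by omega⟩
  · have := heven r
    constructor <;> linarith
  · rw [X_succ h0 h1]
    obtain ⟨ha, hb⟩ := heven (r + 1)
    rw [show 2 * (r + 1) = 2 * r + 1 + 1 by ring] at ha hb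
    have hd0 : (0 : ℝ) ≤ tm (2 * r + 1) := by positivity
    have hd1 : (tm (2 * r + 1) : ℝ) ≤ 1 := by exact_mod_cast tm_le_one _
    constructor <;> nlinarith

end

theorem qG_zpow_lt : qG ^ (-2 : ℤ) < 385 / 1000 := by
  have hs : (2.236 : ℝ) < Real.sqrt 5 := Real.lt_sqrt_of_sq_lt (by norm_num)
  have h : (2.6 : ℝ) < qG ^ 2 := by unfold qG; nlinarith
  rw [zpow_neg, show qG ^ (2 : ℤ) = qG ^ 2 by norm_cast]
  calc (qG ^ 2)⁻¹ < (2.6 : ℝ)⁻¹ := by gcongr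
    _ < 385 / 1000 := by norm_num

/-- for `n ∈ S`: (i) `τ_n + τ_{n+1} = 1`;
(ii) `q_G^{-2} < x_n < 1`, where `x_n = ∑_{i=0}^∞ τ_{n+i} q_KL^{-(i+1)}`. -/
theorem tm_and_xn_of_memS (qKL : ℝ) (hKL : qKL ∈ Set.Ioo (1 : ℝ) 2)
    (hKLsum : ∑' i : ℕ, (tm (i + 1) : ℝ) / qKL ^ (i + 1) = 1)
    (n : ℕ) (hn : memS n) :
    tm n + tm (n + 1) = 1 ∧
    qG ^ (-2 : ℤ) < ∑' i : ℕ, (tm (n + i) : ℝ) / qKL ^ (i + 1) ∧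
    ∑' i : ℕ, (tm (n + i) : ℝ) / qKL ^ (i + 1) < 1 := by
  have hi := tm_add_tm_succ n hn
  refine ⟨hi, ?_⟩
  have hx : ∀ n, ∑' i : ℕ, (tm (n + i) : ℝ) / qKL ^ (i + 1) = X qKL⁻¹ n := fun n =>
    tsum_congr fun i => by rw [inv_pow, div_eq_mul_inv]
  have hX1 : X qKL⁻¹ 1 = 1 := by
    rw [← hx, ← hKLsum]
    exact tsum_congr fun i => by rw [add_comm 1 i]
  rw [hx]
  have h0 : 0 < qKL⁻¹ := inv_pos.2 (by linarith [hKL.1])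
  have h1 : qKL⁻¹ < 1 := inv_lt_one_of_one_lt₀ hKL.1
  generalize qKL⁻¹ = t at *
  obtain ⟨hl, hu⟩ := t_bounds h0 h1 hX1
  obtain ⟨ha, hb⟩ := X_bounds hl hu (n + 2)
  have hG := qG_zpow_lt
  have hsq1 : 25 / 81 < t ^ 2 := by nlinarith
  have hsq2 : t ^ 2 < 100 / 289 := by nlinarith
  have e : X t n = t * (tm n + t * (tm (n + 1) + X t (n + 2))) := by
    rw [X_succ h0 h1 n, X_succ h0 h1 (n + 1)]
  rcases (by omega : (tm n = 0 ∧ tm (n + 1) = 1) ∨ (tm n = 1 ∧ tm (n + 1) = 0)) with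
    ⟨p, p1⟩ | ⟨p, p1⟩
  · -- The lower bound below is tight: `(25/81) * 1.248 > 0.385`.
    have e1 : X t n = t ^ 2 * (1 + X t (n + 2)) := by rw [e, p, p1]; push_cast; ring
    rw [e1]
    constructor <;> nlinarith
  · have e1 : X t n = t + t ^ 2 * X t (n + 2) := by rw [e, p, p1]; push_cast; ring
    rw [e1]
    constructor <;> nlinarith
end
end
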